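/- Let t > 0 and let x : ℝ → ℝ be a function such that for every ρ ∈ ℝ, x(ρ) > 0 and 2·x(ρ)³ + 3t·x(ρ)² = 3·e^{2ρ}. Then x(ρ)·√t·e^{−ρ} → 1 as ρ → −∞. -/

import Mathlib

/-!
Taking the square root of `x² (a x + t) = ε²` gives `x √(a x + t) = ε`. Since `a x ≥ 0`, this first
forces `x ≤ ε / √t → 0`, and then `x √t / ε = √t / √(a x + t) → 1`.
-/

open Filter Topology

theorem mul_sqrt_eq_of_cubic_eq {a t x ε : ℝ} (hx : 0 ≤ x) (hε : 0 ≤ ε)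
    (h : a * x ^ 3 + t * x ^ 2 = ε ^ 2) : x * √(a * x + t) = ε :=
  calc x * √(a * x + t) = √(x ^ 2 * (a * x + t)) := by
        rw [Real.sqrt_mul (sq_nonneg x), Real.sqrt_sq hx]
    _ = √(ε ^ 2) := by rw [← h]; ring_nf
    _ = ε := Real.sqrt_sq hε

theorem le_div_sqrt_of_cubic_eq {a t x ε : ℝ} (ha : 0 ≤ a) (ht : 0 < t) (hx : 0 ≤ x) (hε : 0 ≤ ε)
    (h : a * x ^ 3 + t * x ^ 2 = ε ^ 2) : x ≤ ε / √t := by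
  rw [le_div_iff₀ (Real.sqrt_pos.mpr ht)]
  calc x * √t ≤ x * √(a * x + t) := by
        gcongr
        exact le_add_of_nonneg_left (mul_nonneg ha hx)
    _ = ε := mul_sqrt_eq_of_cubic_eq hx hε h

theorem mul_sqrt_div_eq_of_cubic_eq {a t x ε : ℝ} (hx : 0 ≤ x) (hε : 0 < ε)
    (h : a * x ^ 3 + t * x ^ 2 = ε ^ 2) : x * √t / ε = √t / √(a * x + t) := by
  have hroot : x * √(a * x + t) = ε := mul_sqrt_eq_of_cubic_eq hx hε.le h
  have hx0 : x ≠ 0 := left_ne_zero_of_mul (hroot.trans_ne hε.ne')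
  rw [← hroot, mul_div_mul_left _ _ hx0]

theorem tendsto_zero_of_cubic_eq {α : Type*} {l : Filter α} {a t : ℝ} {x ε : α → ℝ}
    (ha : 0 ≤ a) (ht : 0 < t) (hε : Tendsto ε l (𝓝 0)) (hε0 : ∀ᶠ i in l, 0 ≤ ε i)
    (hx : ∀ᶠ i in l, 0 ≤ x i) (h : ∀ᶠ i in l, a * x i ^ 3 + t * x i ^ 2 = ε i ^ 2) :
    Tendsto x l (𝓝 0) := by
  have hbound : Tendsto (fun i ↦ ε i / √t) l (𝓝 0) := by simpa using hε.div_const √t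
  refine squeeze_zero' hx ?_ hbound
  filter_upwards [hε0, hx, h] with i hεi hxi hi
  exact le_div_sqrt_of_cubic_eq ha ht hxi hεi hi

theorem cubic_root_asymptotics_general {α : Type*} {l : Filter α} {a t : ℝ} {x ε : α → ℝ}
    (ha : 0 ≤ a) (ht : 0 < t) (hε : Tendsto ε l (𝓝 0)) (hε_pos : ∀ᶠ i in l, 0 < ε i)
    (hx : ∀ᶠ i in l, 0 ≤ x i) (h : ∀ᶠ i in l, a * x i ^ 3 + t * x i ^ 2 = ε i ^ 2) :
    Tendsto (fun i ↦ x i * √t / ε i) l (𝓝 1) := by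
  have hx_zero : Tendsto x l (𝓝 0) :=
    tendsto_zero_of_cubic_eq ha ht hε (hε_pos.mono fun _ ↦ le_of_lt) hx h
  have hsqrt : Tendsto (fun i ↦ √(a * x i + t)) l (𝓝 √t) := by
    simpa using ((hx_zero.const_mul a).add_const t).sqrt
  have hs : √t ≠ 0 := (Real.sqrt_pos.mpr ht).ne'
  have hratio : Tendsto (fun i ↦ √t / √(a * x i + t)) l (𝓝 1) :=
    div_self hs ▸ tendsto_const_nhds.div hsqrt hs
  refine hratio.congr' ?_
  filter_upwards [hε_pos, hx, h] with i hεi hxi hi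
  exact (mul_sqrt_div_eq_of_cubic_eq hxi hεi hi).symm

/-- Asymptotics of the positive root of `2x³ + 3t·x² = 3e^{2ρ}`: for each `t > 0`,
`x(ρ) ∼ t^{-1/2} e^{ρ}` as `ρ → −∞`, i.e. `x(ρ)·√t·e^{−ρ} → 1`. -/
theorem cubic_root_asymptotics (t : ℝ) (ht : 0 < t) (x : ℝ → ℝ)
    (hx : ∀ ρ : ℝ, 0 < x ρ ∧ 2 * (x ρ) ^ 3 + 3 * t * (x ρ) ^ 2 = 3 * Real.exp (2 * ρ)) :
    Filter.Tendsto (fun ρ : ℝ => x ρ * Real.sqrt t * Real.exp (-ρ))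
      Filter.atBot (nhds 1) := by
  have hcubic (ρ : ℝ) : 2 / 3 * x ρ ^ 3 + t * x ρ ^ 2 = Real.exp ρ ^ 2 := by
    have hexp : Real.exp (2 * ρ) = Real.exp ρ ^ 2 := mod_cast Real.exp_nat_mul ρ 2
    linear_combination (hx ρ).2 / 3 + hexp
  simpa only [Real.exp_neg, div_eq_mul_inv] using
    cubic_root_asymptotics_general (by norm_num) ht Real.tendsto_exp_atBot
      (.of_forall Real.exp_pos) (.of_forall fun ρ ↦ (hx ρ).1.le) (.of_forall hcubic)
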